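/- arXiv:2604.03491 — 3 statements merged into one kernel-verified Lean document; each statement's English description precedes it below -/
import Mathlib

section
/- Let x ∈ ℝ, let J be a positive integer, and let ε be a real random variable such that ε^u is integrable and (x+ε)^u is integrable for every u with 1 ≤ u ≤ J. Write m_u = E[ε^u]. Define the random variables X_0, X_1, …, X_J recursively by X_0 = 1 and X_j = (x + ε)^j − Σ_{u=1}^{j} C(j, u) · m_u · X_{j−u} for 1 ≤ j ≤ J, where C(j,u) is the binomial coefficient. Then E[X_j] = x^j for every j with 0 ≤ j ≤ J. -/
/-!
Taking expectations in the binomial expansion of `(x + ε)^j` gives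
`E[(x + ε)^j] = ∑_{u=0}^{j} C(j,u) m_u x^{j-u}`, whose `u = 0` term is `x^j` since `m_0 = 1`.
By strong induction `E[X_{j-u}] = x^{j-u}` for `u ≥ 1`, so the correction in the recursion for `X_j`
has expectation exactly the sum of the terms with `u ≥ 1`, leaving `x^j`. The induction carries
integrability of `X_j` along, so that the expectation may be split linearly.
-/

open MeasureTheory

/-- Unbiasedness of the recursive noise-compensated monomial feature estimates: with
`X_0 = 1` and `X_j = (x+ε)^j - ∑_{u=1}^{j} C(j,u) m_u X_{j-u}` where `m_u = E[ε^u]`, one has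
`E[X_j] = x^j` for every `0 ≤ j ≤ J`. -/
theorem noise_compensated_monomial_unbiased
    {Ω : Type*} [MeasurableSpace Ω] (μ : Measure Ω) [IsProbabilityMeasure μ]
    (x : ℝ) (J : ℕ) (hJ : 0 < J) (ε : Ω → ℝ) (hmeas : Measurable ε)
    (hint : ∀ u : ℕ, 1 ≤ u → u ≤ J → Integrable (fun ω => ε ω ^ u) μ)
    (hint' : ∀ u : ℕ, 1 ≤ u → u ≤ J → Integrable (fun ω => (x + ε ω) ^ u) μ)
    (m : ℕ → ℝ) (hm : ∀ u, m u = ∫ ω, ε ω ^ u ∂μ)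
    (X : ℕ → Ω → ℝ)
    (hX0 : ∀ ω, X 0 ω = 1)
    (hXj : ∀ j : ℕ, 1 ≤ j → j ≤ J → ∀ ω,
      X j ω = (x + ε ω) ^ j
        - ∑ u ∈ Finset.Icc 1 j, (j.choose u : ℝ) * m u * X (j - u) ω) :
    ∀ j : ℕ, j ≤ J → ∫ ω, X j ω ∂μ = x ^ j := by
  -- `m_0 = 1` and `ε^0` is integrable because `μ` is a probability measure.
  have hint0 : ∀ u : ℕ, u ≤ J → Integrable (fun ω => ε ω ^ u) μ := by
    intro u hu
    rcases Nat.eq_zero_or_pos u with rfl | h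
    · simp
    · exact hint u h hu
  have hm0 : m 0 = 1 := by simp [hm]
  have hbinom : ∀ j : ℕ, j ≤ J → ∫ ω, (x + ε ω) ^ j ∂μ
      = x ^ j + ∑ u ∈ Finset.Icc 1 j, (j.choose u : ℝ) * m u * x ^ (j - u) := by
    intro j hj
    have hexp : ∀ ω, (x + ε ω) ^ j
        = ∑ u ∈ Finset.range (j + 1), ε ω ^ u * (x ^ (j - u) * (j.choose u : ℝ)) := by
      intro ω
      rw [add_comm, add_pow]
      simp only [mul_assoc]
    have hset : Finset.Icc 1 j = Finset.Ico (0 + 1) (j + 1) := by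
      ext u
      simp only [Finset.mem_Icc, Finset.mem_Ico]
      omega
    simp_rw [hexp]
    rw [integral_finsetSum]
    · simp_rw [integral_mul_const, ← hm]
      rw [Finset.range_eq_Ico, Finset.sum_eq_sum_Ico_succ_bot (Nat.succ_pos j), hset]
      congr 1
      · simp [hm0]
      · exact Finset.sum_congr rfl fun u _ => by ring
    · intro u hu
      rw [Finset.mem_range] at hu
      exact (hint0 u (by omega)).mul_const _
  have key : ∀ j : ℕ, j ≤ J → Integrable (X j) μ ∧ ∫ ω, X j ω ∂μ = x ^ j := by
    intro j
    induction j using Nat.strong_induction_on with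
    | _ j ih =>
      intro hj
      rcases Nat.eq_zero_or_pos j with rfl | hpos
      · have h0 : X 0 = fun _ => 1 := funext hX0
        simp [h0]
      · have hX : X j = fun ω => (x + ε ω) ^ j
            - ∑ u ∈ Finset.Icc 1 j, (j.choose u : ℝ) * m u * X (j - u) ω :=
          funext (hXj j hpos hj)
        have hterm : ∀ u ∈ Finset.Icc 1 j,
            Integrable (fun ω => (j.choose u : ℝ) * m u * X (j - u) ω) μ := by
          intro u hu
          rw [Finset.mem_Icc] at hu
          exact (ih (j - u) (by omega) (by omega)).1.const_mul _
        have hsum := integrable_finsetSum _ hterm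
        have hpow := hint' j hpos hj
        rw [hX]
        refine ⟨hpow.sub hsum, ?_⟩
        rw [integral_sub hpow hsum, integral_finsetSum _ hterm, hbinom j hj, sub_eq_iff_eq_add]
        congr 1
        refine Finset.sum_congr rfl fun u hu => ?_
        rw [Finset.mem_Icc] at hu
        rw [integral_const_mul, (ih (j - u) (by omega) (by omega)).2]
  exact fun j hj => (key j hj).2
end

section
/- Let M be a real symmetric positive semidefinite N×N matrix, let a* ∈ ℝ^N be a unit vector with M a* = 0, and suppose there is a constant c > 0 such that wᵀ M w ≥ c · ‖w‖² for every w ∈ ℝ^N orthogonal to a* (i.e. with ⟨w, a*⟩ = 0). Then for every unit vector u ∈ ℝ^N and every δ ≥ 0 with ‖M u‖ ≤ δ, one has min( ‖u − a*‖, ‖u + a*‖ ) ≤ √2 · δ / c. -/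
/-!
Write `t = ⟨u, a⟩` and `w = u - t a`, the component of `u` orthogonal to `a`, so `‖w‖² = 1 - t²` and
`M w = M u`. The spectral gap and Cauchy-Schwarz give `c ‖w‖² ≤ ⟨w, M u⟩ ≤ ‖w‖ δ`, hence
`1 - t² ≤ (δ / c)²`. Since `‖u ∓ a‖² = 2 ∓ 2 t`, the smaller of the two squared distances is
`2 (1 - |t|) ≤ 2 (1 - t²) ≤ 2 (δ / c)²`, where the first inequality uses `|t| ≤ 1`.
-/

open Matrix

/-- Spectral-gap bound: if `M` is symmetric positive semidefinite, `a*` is a unit vector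
with `M a* = 0`, and `wᵀ M w ≥ c ‖w‖²` for every `w ⊥ a*`, then any unit vector `u` with
`‖M u‖ ≤ δ` satisfies `min(‖u - a*‖, ‖u + a*‖) ≤ √2 · δ / c`. -/
theorem dist_to_null_vectors_le_of_small_residual
    (N : ℕ) (M : Matrix (Fin N) (Fin N) ℝ)
    (hsymm : M.IsSymm) (hpsd : M.PosSemidef)
    (a : Fin N → ℝ) (ha : ∑ i, a i ^ 2 = 1) (hMa : M.mulVec a = 0)
    (c : ℝ) (hc : 0 < c)
    (hgap : ∀ w : Fin N → ℝ, (∑ i, w i * a i) = 0 →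
      c * (∑ i, w i ^ 2) ≤ w ⬝ᵥ M.mulVec w) :
    ∀ u : Fin N → ℝ, (∑ i, u i ^ 2) = 1 → ∀ δ : ℝ, 0 ≤ δ →
      Real.sqrt (∑ i, (M.mulVec u i) ^ 2) ≤ δ →
      min (Real.sqrt (∑ i, (u i - a i) ^ 2)) (Real.sqrt (∑ i, (u i + a i) ^ 2))
        ≤ Real.sqrt 2 * δ / c := by
  intro u hu δ hδ hres
  have hR : ∑ i, (M.mulVec u i) ^ 2 ≤ δ ^ 2 := (Real.sqrt_le_left hδ).mp hres
  obtain ⟨t, ht⟩ : ∃ t, ∑ i, u i * a i = t := ⟨_, rfl⟩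
  have hdist : ∀ s : ℝ, ∑ i, (u i + s * a i) ^ 2 = 1 + 2 * s * t + s ^ 2 := by
    intro s
    calc ∑ i, (u i + s * a i) ^ 2
        = ∑ i, (u i ^ 2 + 2 * s * (u i * a i) + s ^ 2 * a i ^ 2) :=
          Finset.sum_congr rfl fun i _ => by ring
      _ = 1 + 2 * s * t + s ^ 2 := by
          rw [Finset.sum_add_distrib, Finset.sum_add_distrib, ← Finset.mul_sum,
            ← Finset.mul_sum, hu, ht, ha, mul_one]
  have hw : ∑ i, (u + (-t) • a) i ^ 2 = 1 - t ^ 2 := by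
    simp only [Pi.add_apply, Pi.smul_apply, smul_eq_mul, hdist]
    ring
  have horth : ∑ i, (u + (-t) • a) i * a i = 0 := by
    calc ∑ i, (u + (-t) • a) i * a i = ∑ i, (u i * a i + (-t) * a i ^ 2) :=
          Finset.sum_congr rfl fun i _ => by
            simp only [Pi.add_apply, Pi.smul_apply, smul_eq_mul]
            ring
      _ = 0 := by
          rw [Finset.sum_add_distrib, ← Finset.mul_sum, ht, ha]
          ring
  have hMw : M.mulVec (u + (-t) • a) = M.mulVec u := by
    rw [Matrix.mulVec_add, Matrix.mulVec_smul, hMa, smul_zero, add_zero]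
  have hg := hgap _ horth
  have hcs := Finset.sum_mul_sq_le_sq_mul_sq Finset.univ (u + (-t) • a) (M.mulVec u)
  have hnn : 0 ≤ ∑ i, (u + (-t) • a) i ^ 2 := Finset.sum_nonneg fun i _ => sq_nonneg _
  rw [hMw, hw, dotProduct] at hg
  rw [hw] at hcs hnn
  have key : 1 - t ^ 2 ≤ (δ / c) ^ 2 := by
    rcases hnn.eq_or_lt with h0 | h0
    · rw [← h0]
      positivity
    · rw [div_pow, le_div_iff₀ (by positivity)]
      -- Both sides are multiplied by `‖w‖² = 1 - t² > 0` to match the squared inequality.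
      refine le_of_mul_le_mul_left ?_ h0
      calc (1 - t ^ 2) * ((1 - t ^ 2) * c ^ 2) = (c * (1 - t ^ 2)) ^ 2 := by ring
        _ ≤ (∑ i, (u + (-t) • a) i * M.mulVec u i) ^ 2 :=
            pow_le_pow_left₀ (by positivity) hg 2
        _ ≤ (1 - t ^ 2) * δ ^ 2 := hcs.trans (mul_le_mul_of_nonneg_left hR h0.le)
  have hbound : ∀ x : ℝ, x ≤ 2 * (1 - t ^ 2) → Real.sqrt x ≤ Real.sqrt 2 * δ / c := by
    intro x hx
    refine Real.sqrt_le_iff.mpr ⟨by positivity, ?_⟩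
    rw [mul_div_assoc, mul_pow, Real.sq_sqrt zero_le_two]
    linarith
  have hm : ∑ i, (u i - a i) ^ 2 = 2 - 2 * t := by
    have h := hdist (-1)
    simp only [neg_one_mul, ← sub_eq_add_neg] at h
    linarith
  have hp : ∑ i, (u i + a i) ^ 2 = 2 + 2 * t := by
    have h := hdist 1
    simp only [one_mul] at h
    linarith
  -- The closer null vector is `a` or `-a` according to the sign of `t`.
  rcases le_total 0 t with h | h
  · exact (min_le_left _ _).trans (hbound _ (by rw [hm]; nlinarith))
  · exact (min_le_right _ _).trans (hbound _ (by rw [hp]; nlinarith))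
end

section
/- Let (M̂_L)_{L ≥ 1} be a sequence of random N×N real symmetric matrices on a probability space and (M_L)_{L ≥ 1} a sequence of deterministic real symmetric positive semidefinite N×N matrices such that, almost surely, M̂_L − M_L converges entrywise to the zero matrix as L → ∞. Let a* ∈ ℝ^N be a unit vector with M_L a* = 0 for every L, and suppose there is a constant c > 0, independent of L, such that wᵀ M_L w ≥ c · ‖w‖² for every L and every w ∈ ℝ^N orthogonal to a*. For each L and each sample point, let â_L be a unit eigenvector of M̂_L associated with an eigenvalue of minimal absolute value among the eigenvalues of M̂_L, and define d_L = min( ‖â_L − a*‖, ‖â_L + a*‖ ). Then d_L converges to 0 almost surely as L → ∞. -/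
/-!
Write `E = M̂ - M`, `e = ∑ |E k l|`, and split the unit eigenvector as `â = t a + w` with `w ⟂ a`.

* Since `M a = 0`, the vector `M̂ a = E a` is small, so the smallest absolute eigenvalue `λ` of the
  symmetric matrix `M̂` satisfies `|λ| ≤ ‖M̂ a‖ ≤ e` (`sq_eigenvalue_mul_le`, `abs_eigenvalue_le`).
* Since `M w = M â = λ â - E â`, the spectral gap gives
  `c ‖w‖² ≤ wᵀ M w = λ ‖w‖² - wᵀ E â ≤ 2 e`.
* Since `‖â ∓ a‖² = 2 ∓ 2 t` and `t² = 1 - ‖w‖²`, the squared distance from `â` to `{a, -a}` is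
  `2 - 2 |t| ≤ 2 ‖w‖²`.

Hence `d² ≤ 4 e / c` (`dist_sq_le`), in the spirit of the Davis-Kahan theorem, and `e → 0` almost
surely.
-/

open MeasureTheory Filter Matrix

/-- If every eigenvalue of a symmetric matrix `A` has absolute value at least `|m|`, then
`m² ‖x‖² ≤ ‖A x‖²`: expand `x` and `A x` in an orthonormal eigenbasis. -/
lemma sq_eigenvalue_mul_le {N : ℕ} {A : Matrix (Fin N) (Fin N) ℝ} (hA : A.IsHermitian) (m : ℝ)
    (hm : ∀ i, |m| ≤ |hA.eigenvalues i|) (x : Fin N → ℝ) :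
    m ^ 2 * ∑ i, x i ^ 2 ≤ ∑ i, (A.mulVec x) i ^ 2 := by
  have parseval : ∀ y : Fin N → ℝ,
      ∑ i, y i ^ 2 = ∑ j, ((hA.eigenvectorBasis j).ofLp ⬝ᵥ y) ^ 2 := by
    intro y
    have h := hA.eigenvectorBasis.sum_sq_norm_inner_right (WithLp.toLp 2 y)
    rw [EuclideanSpace.real_norm_sq_eq] at h
    rw [← h]
    refine Finset.sum_congr rfl fun j _ => ?_
    rw [EuclideanSpace.inner_eq_star_dotProduct, Real.norm_eq_abs, sq_abs, dotProduct_comm]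
    simp
  have hcoord : ∀ j, (hA.eigenvectorBasis j).ofLp ⬝ᵥ A.mulVec x
      = hA.eigenvalues j * ((hA.eigenvectorBasis j).ofLp ⬝ᵥ x) := by
    intro j
    have hT : Aᵀ = A := by simpa [Matrix.IsHermitian] using hA
    rw [dotProduct_mulVec, ← mulVec_transpose, hT, hA.mulVec_eigenvectorBasis, smul_dotProduct,
      smul_eq_mul]
  rw [parseval x, parseval (A.mulVec x), Finset.mul_sum]
  refine Finset.sum_le_sum fun j _ => ?_
  rw [hcoord, mul_pow]
  exact mul_le_mul_of_nonneg_right (sq_le_sq.2 (hm j)) (sq_nonneg _)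

lemma abs_le_one_of_sum_sq_le {N : ℕ} {x : Fin N → ℝ} (hx : ∑ i, x i ^ 2 ≤ 1) (i : Fin N) :
    |x i| ≤ 1 := by
  rw [← sq_le_one_iff_abs_le_one]
  exact (Finset.single_le_sum (f := fun i => x i ^ 2) (fun i _ => sq_nonneg _)
    (Finset.mem_univ i)).trans hx

lemma sum_abs_mulVec_le {N : ℕ} (E : Matrix (Fin N) (Fin N) ℝ) {x : Fin N → ℝ}
    (hx : ∑ i, x i ^ 2 ≤ 1) : ∑ k, |(E.mulVec x) k| ≤ ∑ k, ∑ l, |E k l| := by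
  refine Finset.sum_le_sum fun k _ => ?_
  rw [mulVec, dotProduct]
  refine (Finset.abs_sum_le_sum_abs _ _).trans ?_
  refine Finset.sum_le_sum fun l _ => ?_
  rw [abs_mul]
  exact mul_le_of_le_one_right (abs_nonneg _) (abs_le_one_of_sum_sq_le hx l)

lemma abs_dotProduct_mulVec_le {N : ℕ} (E : Matrix (Fin N) (Fin N) ℝ) {w x : Fin N → ℝ}
    (hw : ∑ i, w i ^ 2 ≤ 1) (hx : ∑ i, x i ^ 2 ≤ 1) :
    |w ⬝ᵥ E.mulVec x| ≤ ∑ k, ∑ l, |E k l| := by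
  refine le_trans ?_ (sum_abs_mulVec_le E hx)
  refine (Finset.abs_sum_le_sum_abs _ _).trans (Finset.sum_le_sum fun k _ => ?_)
  rw [abs_mul]
  exact mul_le_of_le_one_left (abs_nonneg _) (abs_le_one_of_sum_sq_le hw k)

/-- A lower bound `|m|` for the absolute eigenvalues of `A` is at most `‖A a‖`, where
`A a = (A - M) a` because `M a = 0`. -/
lemma abs_eigenvalue_le {N : ℕ} {A M : Matrix (Fin N) (Fin N) ℝ} (hA : A.IsHermitian) (m : ℝ)
    (hm : ∀ i, |m| ≤ |hA.eigenvalues i|) {a : Fin N → ℝ} (ha : ∑ i, a i ^ 2 = 1)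
    (haM : M.mulVec a = 0) : |m| ≤ ∑ k, ∑ l, |(A - M) k l| := by
  have h1 := sq_eigenvalue_mul_le hA m hm a
  have h2 : A.mulVec a = (A - M).mulVec a := by rw [sub_mulVec, haM, sub_zero]
  rw [ha, mul_one, h2] at h1
  have h3 : ∑ i, ((A - M).mulVec a) i ^ 2 ≤ (∑ i, |((A - M).mulVec a) i|) ^ 2 := by
    simpa [sq_abs] using Finset.sum_sq_le_sq_sum_of_nonneg
      (s := Finset.univ) (f := fun i => |((A - M).mulVec a) i|) (fun i _ => abs_nonneg _)
  have h4 := sum_abs_mulVec_le (A - M) ha.le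
  exact (abs_le_of_sq_le_sq (h1.trans h3) (Finset.sum_nonneg fun i _ => abs_nonneg _)).trans h4

/-- A perturbation bound of Davis-Kahan type: the squared distance from the unit eigenvector `v`
to `{a, -a}` is at most `4 / c` times the entrywise `ℓ¹` norm of `A - M`. -/
lemma dist_sq_le {N : ℕ} {A M : Matrix (Fin N) (Fin N) ℝ} (hA : A.IsHermitian) (m : ℝ)
    (hm : ∀ i, |m| ≤ |hA.eigenvalues i|) {a v : Fin N → ℝ} (ha : ∑ i, a i ^ 2 = 1)
    (haM : M.mulVec a = 0) {c : ℝ} (hc : 0 < c)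
    (hgap : ∀ w : Fin N → ℝ, (∑ i, w i * a i) = 0 → c * (∑ i, w i ^ 2) ≤ w ⬝ᵥ M.mulVec w)
    (hv : ∑ i, v i ^ 2 = 1) (hev : A.mulVec v = m • v) :
    (min (Real.sqrt (∑ i, (v i - a i) ^ 2)) (Real.sqrt (∑ i, (v i + a i) ^ 2))) ^ 2
      ≤ 4 / c * ∑ k, ∑ l, |(A - M) k l| := by
  set e := ∑ k, ∑ l, |(A - M) k l| with he
  obtain ⟨t, ht⟩ : ∃ t, t = ∑ i, v i * a i := ⟨_, rfl⟩
  obtain ⟨w, hw⟩ : ∃ w : Fin N → ℝ, w = v - t • a := ⟨_, rfl⟩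
  have hwi : ∀ i, w i = v i - t * a i := fun i => by simp [hw]
  have hminus : ∑ i, (v i - a i) ^ 2 = 2 - 2 * t := by
    calc ∑ i, (v i - a i) ^ 2 = ∑ i, (v i ^ 2 + a i ^ 2 - 2 * (v i * a i)) :=
          Finset.sum_congr rfl fun i _ => by ring
      _ = 2 - 2 * t := by
          rw [Finset.sum_sub_distrib, Finset.sum_add_distrib, ← Finset.mul_sum, hv, ha, ht]; ring
  have hplus : ∑ i, (v i + a i) ^ 2 = 2 + 2 * t := by
    calc ∑ i, (v i + a i) ^ 2 = ∑ i, (v i ^ 2 + a i ^ 2 + 2 * (v i * a i)) :=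
          Finset.sum_congr rfl fun i _ => by ring
      _ = 2 + 2 * t := by
          rw [Finset.sum_add_distrib, Finset.sum_add_distrib, ← Finset.mul_sum, hv, ha, ht]; ring
  have hperp : ∑ i, w i * a i = 0 := by
    calc ∑ i, w i * a i = ∑ i, (v i * a i - t * a i ^ 2) :=
          Finset.sum_congr rfl fun i _ => by rw [hwi]; ring
      _ = 0 := by rw [Finset.sum_sub_distrib, ← Finset.mul_sum, ha, ← ht]; ring
  have hwv : ∑ i, w i * v i = 1 - t ^ 2 := by
    calc ∑ i, w i * v i = ∑ i, (v i ^ 2 - t * (v i * a i)) :=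
          Finset.sum_congr rfl fun i _ => by rw [hwi]; ring
      _ = 1 - t ^ 2 := by rw [Finset.sum_sub_distrib, ← Finset.mul_sum, hv, ← ht]; ring
  have hww : ∑ i, w i ^ 2 = 1 - t ^ 2 := by
    calc ∑ i, w i ^ 2 = ∑ i, (w i * v i - t * (w i * a i)) :=
          Finset.sum_congr rfl fun i _ => by rw [hwi]; ring
      _ = 1 - t ^ 2 := by rw [Finset.sum_sub_distrib, ← Finset.mul_sum, hwv, hperp]; ring
  have hww0 : 0 ≤ 1 - t ^ 2 := hww ▸ Finset.sum_nonneg fun i _ => sq_nonneg _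
  have hMw : M.mulVec w = m • v - (A - M).mulVec v := by
    rw [hw, mulVec_sub, mulVec_smul, haM, sub_mulVec, hev]; simp
  have hquad : w ⬝ᵥ M.mulVec w = m * (1 - t ^ 2) - w ⬝ᵥ (A - M).mulVec v := by
    rw [hMw, dotProduct_sub, dotProduct_smul, smul_eq_mul, ← hwv]; rfl
  have hg := hgap w hperp
  rw [hquad, hww] at hg
  have hlam : |m| ≤ e := abs_eigenvalue_le hA m hm ha haM
  have hE : |w ⬝ᵥ (A - M).mulVec v| ≤ e :=
    abs_dotProduct_mulVec_le _ (by rw [hww]; nlinarith [sq_nonneg t]) hv.le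
  have hm1 : m * (1 - t ^ 2) ≤ e := by
    have h1 := le_abs_self m
    have h2 := abs_nonneg m
    nlinarith [sq_nonneg t]
  have hgap2 : c * (1 - t ^ 2) ≤ 2 * e := by linarith [neg_abs_le (w ⬝ᵥ (A - M).mulVec v)]
  have ht1 : |t| ≤ 1 := by rw [← sq_le_one_iff_abs_le_one]; linarith
  obtain ⟨htl, htu⟩ := abs_le.1 ht1
  have hfinal : 2 * (1 - t ^ 2) ≤ 4 / c * e := by
    rw [div_mul_eq_mul_div, le_div_iff₀ hc]; linarith
  refine le_trans ?_ hfinal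
  rw [hminus, hplus]
  have hmin0 : 0 ≤ min (Real.sqrt (2 - 2 * t)) (Real.sqrt (2 + 2 * t)) :=
    le_min (Real.sqrt_nonneg _) (Real.sqrt_nonneg _)
  rcases le_total 0 t with h0 | h0
  · calc _ ≤ Real.sqrt (2 - 2 * t) ^ 2 := pow_le_pow_left₀ hmin0 (min_le_left _ _) 2
      _ = 2 - 2 * t := Real.sq_sqrt (by linarith)
      _ ≤ 2 * (1 - t ^ 2) := by nlinarith
  · calc _ ≤ Real.sqrt (2 + 2 * t) ^ 2 := pow_le_pow_left₀ hmin0 (min_le_right _ _) 2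
      _ = 2 + 2 * t := Real.sq_sqrt (by linarith)
      _ ≤ 2 * (1 - t ^ 2) := by nlinarith

open MeasureTheory Filter Matrix

/-- Almost sure consistency of the RAIN-FIT coefficient vector: if almost surely
`M̂_L - M_L → 0` entrywise, each `M_L` is symmetric PSD with null space spanned by the unit
vector `a*` and a uniform spectral gap `c > 0`, and `â_L` is a unit eigenvector of the
symmetric matrix `M̂_L` for an eigenvalue of minimal absolute value, then
`d_L = min(‖â_L - a*‖, ‖â_L + a*‖) → 0` almost surely. -/
theorem rainfit_coefficient_consistency
    {Ω : Type*} [MeasurableSpace Ω] (μ : Measure Ω) [IsProbabilityMeasure μ]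
    (N : ℕ) (Mhat : ℕ → Ω → Matrix (Fin N) (Fin N) ℝ)
    (hherm : ∀ (L : ℕ) (ω : Ω), (Mhat L ω).IsHermitian)
    (M : ℕ → Matrix (Fin N) (Fin N) ℝ)
    (hMsymm : ∀ L, (M L).IsSymm) (hMpsd : ∀ L, (M L).PosSemidef)
    (hconv : ∀ᵐ ω ∂μ, ∀ k l : Fin N,
      Tendsto (fun L : ℕ => Mhat L ω k l - M L k l) atTop (nhds 0))
    (a : Fin N → ℝ) (ha : ∑ i, a i ^ 2 = 1) (haM : ∀ L, (M L).mulVec a = 0)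
    (c : ℝ) (hc : 0 < c)
    (hgap : ∀ (L : ℕ) (w : Fin N → ℝ), (∑ i, w i * a i) = 0 →
      c * (∑ i, w i ^ 2) ≤ w ⬝ᵥ (M L).mulVec w)
    (ahat : ℕ → Ω → Fin N → ℝ)
    (hunit : ∀ (L : ℕ) (ω : Ω), ∑ i, ahat L ω i ^ 2 = 1)
    (heig : ∀ (L : ℕ) (ω : Ω), ∃ i₀ : Fin N,
      (Mhat L ω).mulVec (ahat L ω) = (hherm L ω).eigenvalues i₀ • ahat L ω
        ∧ ∀ i, |(hherm L ω).eigenvalues i₀| ≤ |(hherm L ω).eigenvalues i|)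
    (d : ℕ → Ω → ℝ)
    (hd : ∀ (L : ℕ) (ω : Ω),
      d L ω = min (Real.sqrt (∑ i, (ahat L ω i - a i) ^ 2))
                  (Real.sqrt (∑ i, (ahat L ω i + a i) ^ 2))) :
    ∀ᵐ ω ∂μ, Tendsto (fun L : ℕ => d L ω) atTop (nhds 0) := by
  filter_upwards [hconv] with ω hω
  have he : Tendsto (fun L => ∑ k, ∑ l, |(Mhat L ω - M L) k l|) atTop (nhds 0) := by
    have h := tendsto_finsetSum (Finset.univ : Finset (Fin N)) fun k _ =>
      tendsto_finsetSum (Finset.univ : Finset (Fin N)) fun l _ => (hω k l).abs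
    simpa using h
  have hsq : Tendsto (fun L => d L ω ^ 2) atTop (nhds 0) := by
    refine squeeze_zero (fun L => sq_nonneg _) (fun L => ?_)
      (by simpa using he.const_mul (4 / c))
    obtain ⟨i₀, hev, hmin⟩ := heig L ω
    rw [hd]
    exact dist_sq_le (hherm L ω) _ hmin ha (haM L) hc (hgap L) (hunit L ω) hev
  have hnonneg : ∀ L, 0 ≤ d L ω := fun L => by
    rw [hd]; exact le_min (Real.sqrt_nonneg _) (Real.sqrt_nonneg _)
  simpa [Real.sqrt_sq (hnonneg _)] using hsq.sqrt
end
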